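/- Let Q be a global BRV such that I^sem(Q) determines Q on O^sem(Q). Then Q is inertially cylindrified on V ∖ (I^sem(Q) ∪ O^sem(Q)). -/

import Mathlib

/-- A binary relation on valuations (BRV). -/
abbrev BRV (V dom : Type*) := Set ((V → dom) × (V → dom))

namespace BRV

variable {V dom : Type*}

/-- `ν1` and `ν2` agree on the set `Y` of variables. -/
def AgreeOn (ν1 ν2 : V → dom) (Y : Set V) : Prop := ∀ y ∈ Y, ν1 y = ν2 y

/-- Composition of BRVs. -/
def comp (A B : BRV V dom) : BRV V dom :=
  {p | ∃ ν3, (p.1, ν3) ∈ A ∧ (ν3, p.2) ∈ B}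

/-- Left cylindrification. -/
def cyll (Z : Set V) (A : BRV V dom) : BRV V dom :=
  {p | ∃ ν1', (ν1', p.2) ∈ A ∧ AgreeOn ν1' p.1 Zᶜ}

/-- Right cylindrification. -/
def cylr (Z : Set V) (A : BRV V dom) : BRV V dom :=
  {p | ∃ ν2', (p.1, ν2') ∈ A ∧ AgreeOn ν2' p.2 Zᶜ}

/-- Left selection. -/
def sell (x y : V) (A : BRV V dom) : BRV V dom := {p ∈ A | p.1 x = p.1 y}

/-- Right selection. -/
def selr (x y : V) (A : BRV V dom) : BRV V dom := {p ∈ A | p.2 x = p.2 y}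

/-- Left-to-right selection. -/
def sellr (x y : V) (A : BRV V dom) : BRV V dom := {p ∈ A | p.1 x = p.2 y}


end BRV


/-- A global BRV: a function from interpretations to BRVs.
`I` is the type of interpretations. -/
abbrev GBRV (V dom I : Type*) := I → BRV V dom

/-- Semantic outputs of a global BRV. -/
def Osem {V dom I : Type*} (Q : GBRV V dom I) : Set V :=
  {x | ∃ (D : I) (p : (V → dom) × (V → dom)), p ∈ Q D ∧ p.1 x ≠ p.2 x}

/-- `X` determines `Q` on `Y`. -/
def Determines {V dom I : Type*} (Q : GBRV V dom I) (X Y : Set V) : Prop :=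
  ∀ (D : I), ∀ p ∈ Q D, ∀ ν1' : V → dom, BRV.AgreeOn ν1' p.1 X →
    ∃ ν2' : V → dom, BRV.AgreeOn ν2' p.2 Y ∧ (ν1', ν2') ∈ Q D

/-- Semantic inputs of a global BRV. -/
def Isem {V dom I : Type*} (Q : GBRV V dom I) : Set V :=
  {x | ¬ Determines Q ({x}ᶜ) (Osem Q)}

-- `ν` patched with the `X`-valuation `ν'` (the values of `ν'` outside `X` are irrelevant).
open Classical in
noncomputable def patch {V dom : Type*} (ν ν' : V → dom) (X : Set V) : V → dom :=
  fun v => if v ∈ X then ν' v else ν v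

/-- A global BRV is inertially cylindrified on `X`. -/
def InertCyl {V dom I : Type*} (Q : GBRV V dom I) (X : Set V) : Prop :=
  (∀ x ∈ X, x ∉ Osem Q) ∧
  ∀ (D : I), ∀ p ∈ Q D, ∀ ν' : V → dom,
    (patch p.1 ν' X, patch p.2 ν' X) ∈ Q D

/-!
A pair of `Q D` satisfies inertia: its two valuations coincide off the semantic outputs, so the
second is recovered from the first together with its own values on the outputs. Overwriting both
valuations of a pair off `X ∪ Osem Q` preserves the first one on `X`, so determinacy supplies some
partner for it. That partner and the patched second valuation have the same values on the outputs
and both follow the patched first valuation elsewhere, hence they are equal.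
-/

section Valuations

variable {V dom : Type*} {ν₁ ν₂ ν₃ : V → dom} {Y Z : Set V}

namespace BRV.AgreeOn

theorem symm (h : AgreeOn ν₁ ν₂ Y) : AgreeOn ν₂ ν₁ Y :=
  fun y hy => (h y hy).symm

theorem trans (h₁₂ : AgreeOn ν₁ ν₂ Y) (h₂₃ : AgreeOn ν₂ ν₃ Y) : AgreeOn ν₁ ν₃ Y :=
  fun y hy => (h₁₂ y hy).trans (h₂₃ y hy)

theorem eq_of_compl (h : AgreeOn ν₁ ν₂ Y) (hc : AgreeOn ν₁ ν₂ Yᶜ) : ν₁ = ν₂ := by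
  funext v
  by_cases hv : v ∈ Y
  · exact h v hv
  · exact hc v hv

theorem patch (h : AgreeOn ν₁ ν₂ Y) (ν' : V → dom) (Z : Set V) :
    AgreeOn (patch ν₁ ν' Z) (patch ν₂ ν' Z) Y := by
  intro y hy
  simp only [_root_.patch, h y hy]

end BRV.AgreeOn

theorem patch_agreeOn_of_disjoint (ν ν' : V → dom) (hYZ : Disjoint Y Z) :
    BRV.AgreeOn (patch ν ν' Z) ν Y :=
  fun _ hy => if_neg (hYZ.notMem_of_mem_left hy)

end Valuations

section GlobalBRV

variable {V dom I : Type*} {Q : GBRV V dom I} {D : I} {ν₁ ν₂ ν : V → dom}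

theorem agreeOn_compl_Osem (hQ : (ν₁, ν₂) ∈ Q D) : BRV.AgreeOn ν₁ ν₂ (Osem Q)ᶜ :=
  fun _ hx => not_not.mp fun hne => hx ⟨D, (ν₁, ν₂), hQ, hne⟩

theorem eq_of_agreeOn_Osem_of_agreeOn_compl (hQ : (ν₁, ν₂) ∈ Q D)
    (hout : BRV.AgreeOn ν₂ ν (Osem Q)) (hinert : BRV.AgreeOn ν₁ ν (Osem Q)ᶜ) : ν₂ = ν :=
  hout.eq_of_compl ((agreeOn_compl_Osem hQ).symm.trans hinert)

theorem Determines.patch_mem {X Z : Set V} (h : Determines Q X (Osem Q)) (hX : Disjoint X Z)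
    (hO : Disjoint (Osem Q) Z) (hQ : (ν₁, ν₂) ∈ Q D) (ν' : V → dom) :
    (patch ν₁ ν' Z, patch ν₂ ν' Z) ∈ Q D := by
  obtain ⟨μ, hμ, hmem⟩ := h D (ν₁, ν₂) hQ (patch ν₁ ν' Z) (patch_agreeOn_of_disjoint ν₁ ν' hX)
  have hout : BRV.AgreeOn μ (patch ν₂ ν' Z) (Osem Q) :=
    hμ.trans (patch_agreeOn_of_disjoint ν₂ ν' hO).symm
  have hinert : BRV.AgreeOn (patch ν₁ ν' Z) (patch ν₂ ν' Z) (Osem Q)ᶜ :=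
    (agreeOn_compl_Osem hQ).patch ν' Z
  rwa [← eq_of_agreeOn_Osem_of_agreeOn_compl hmem hout hinert]

theorem stmt4_general {X : Set V} (h : Determines Q X (Osem Q)) :
    InertCyl Q (X ∪ Osem Q)ᶜ := by
  obtain ⟨hX, hO⟩ := Set.disjoint_union_left.mp (disjoint_compl_right (a := X ∪ Osem Q))
  exact ⟨fun _ hx => hO.notMem_of_mem_right hx, fun _ _ hp => h.patch_mem hX hO hp⟩

end GlobalBRV

theorem stmt4 (V dom I : Type*) [Countable dom] [Infinite dom]
    (Q : GBRV V dom I)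
    (h : Determines Q (Isem Q) (Osem Q)) :
    InertCyl Q ((Isem Q ∪ Osem Q)ᶜ) :=
  stmt4_general h
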